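/- arXiv:2211.04749 — 2 statements merged into one kernel-verified Lean document; each statement's English description precedes it below -/
import Mathlib

section
/- The number of partitions of a non-negative integer n into distinct parts with no two consecutive parts equals the number of partitions of n into parts congruent to 1 or 4 modulo 5. -/
section

variable {R : Type*} [CommRing R] (q : R)

/-- Gaussian binomial coefficients evaluated at `q`, with the lower index in `ℤ`. -/
def gaussBinom : ℕ → ℤ → R
  | 0, k => if k = 0 then 1 else 0
  | n + 1, k => gaussBinom n (k - 1) + q ^ k.toNat * gaussBinom n k

/-- The finite `q`-Pochhammer product `(q; q)_n`. -/
def qPoch (n : ℕ) : R :=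
  ∏ i ∈ Finset.range n, (1 - q ^ (i + 1))

/-- The theta coefficients `(-1) ^ j * q ^ (j * (5 * j + 1) / 2)`. -/
def thetaCoeff (j : ℤ) : R :=
  ((j.negOnePow : ℤ) : R) * q ^ (j * (5 * j + 1) / 2).toNat

theorem gaussBinom_of_neg (n : ℕ) {k : ℤ} (hk : k < 0) : gaussBinom q n k = 0 := by
  induction n generalizing k with
  | zero => simp [gaussBinom, hk.ne]
  | succ n ih => rw [gaussBinom, ih hk, ih (by omega)]; simp

theorem gaussBinom_of_lt (n : ℕ) {k : ℤ} (hk : n < k) : gaussBinom q n k = 0 := by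
  induction n generalizing k with
  | zero => simp [gaussBinom, show k ≠ 0 by omega]
  | succ n ih => rw [gaussBinom, ih (by omega), ih (by omega)]; simp

theorem gaussBinom_succ (n : ℕ) (k : ℤ) :
    gaussBinom q (n + 1) k = gaussBinom q n (k - 1) + q ^ k.toNat * gaussBinom q n k := rfl

theorem gaussBinom_succ' (n : ℕ) (k : ℤ) :
    gaussBinom q (n + 1) k =
      q ^ (n + 1 - k).toNat * gaussBinom q n (k - 1) + gaussBinom q n k := by
  induction n generalizing k with
  | zero =>
    simp only [gaussBinom]
    rcases eq_or_ne k 0 with rfl | h0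
    · simp
    rcases eq_or_ne k 1 with rfl | h1
    · simp
    · simp [h0, sub_ne_zero.2 h1]
  | succ n ih =>
    have h1 : q ^ k.toNat * q ^ ((n : ℤ) + 1 - k).toNat * gaussBinom q n (k - 1) =
        q ^ ((n + 1 : ℕ) + 1 - k).toNat * q ^ (k - 1).toNat * gaussBinom q n (k - 1) := by
      rcases lt_or_ge k 1 with h | h
      · simp [gaussBinom_of_neg q n (show k - 1 < 0 by omega)]
      rcases lt_or_ge ((n : ℤ) + 1) k with h' | h'
      · simp [gaussBinom_of_lt q n (show (n : ℤ) < k - 1 by omega)]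
      rw [← pow_add, ← pow_add]
      congr 2
      omega
    have h2 := ih (k - 1)
    rw [show ((n : ℤ) + 1 - (k - 1)) = (n + 1 : ℕ) + 1 - k by push_cast; ring] at h2
    linear_combination gaussBinom_succ q (n + 1) k + h2 + q ^ k.toNat * ih k
      - q ^ ((n + 1 : ℕ) + 1 - k).toNat * gaussBinom_succ q n (k - 1) - gaussBinom_succ q n k + h1

theorem gaussBinom_zero_right (n : ℕ) : gaussBinom q n 0 = 1 := by
  induction n with
  | zero => simp [gaussBinom]
  | succ n ih => simp [gaussBinom_succ, ih, gaussBinom_of_neg]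

theorem gaussBinom_self (n : ℕ) : gaussBinom q n n = 1 := by
  induction n with
  | zero => simp [gaussBinom]
  | succ n ih => simp [gaussBinom_succ, ih, gaussBinom_of_lt]

theorem qPoch_succ (n : ℕ) : qPoch q (n + 1) = qPoch q n * (1 - q ^ (n + 1)) :=
  Finset.prod_range_succ _ _

theorem gaussBinom_mul_qPoch (a b : ℕ) :
    gaussBinom q (a + b) a * qPoch q a * qPoch q b = qPoch q (a + b) := by
  induction h : a + b generalizing a b with
  | zero =>
    obtain ⟨rfl, rfl⟩ : a = 0 ∧ b = 0 := by omega
    simp [gaussBinom, qPoch]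
  | succ n ih =>
    rcases a with _ | a
    · obtain rfl : b = n + 1 := by omega
      rw [Nat.cast_zero, gaussBinom_zero_right]
      simp [qPoch]
    rcases b with _ | b
    · obtain rfl : a = n := by omega
      rw [gaussBinom_self]
      simp [qPoch]
    have h1 := ih a (b + 1) (by omega)
    have h2 := ih (a + 1) b (by omega)
    obtain rfl : n = a + b + 1 := by omega
    rw [gaussBinom_succ, qPoch_succ q (a + b + 1)]
    have h3 : ((a + 1 : ℕ) : ℤ) - 1 = a := by push_cast; ring
    rw [h3, Int.toNat_natCast]
    rw [qPoch_succ] at h1 h2 ⊢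
    rw [qPoch_succ]
    linear_combination (1 - q ^ (a + 1)) * h1 + q ^ (a + 1) * (1 - q ^ (b + 1)) * h2

theorem thetaExponent_succ (j : ℤ) :
    (j + 1) * (5 * (j + 1) + 1) / 2 = j * (5 * j + 1) / 2 + (5 * j + 3) := by
  rw [show (j + 1) * (5 * (j + 1) + 1) = j * (5 * j + 1) + (5 * j + 3) * 2 by ring,
    Int.add_mul_ediv_right _ _ two_ne_zero]

theorem natAbs_le_thetaExponent (j : ℤ) : (j.natAbs : ℤ) ≤ j * (5 * j + 1) / 2 := by
  rw [Int.le_ediv_iff_mul_le two_pos]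
  rcases lt_trichotomy j 0 with h | rfl | h
  · rw [Int.ofNat_natAbs_of_nonpos h.le]; nlinarith
  · simp
  · rw [Int.natAbs_of_nonneg h.le]; nlinarith

theorem thetaCoeff_succ_mul (j : ℤ) {a b : ℤ} (ha : 0 ≤ a) (hb : 0 ≤ b) (h : b = a + 5 * j + 3) :
    thetaCoeff q (j + 1) * q ^ a.toNat = -(thetaCoeff q j * q ^ b.toNat) := by
  have h0 := natAbs_le_thetaExponent j
  have h1 := natAbs_le_thetaExponent (j + 1)
  have h2 := thetaExponent_succ j
  unfold thetaCoeff
  rw [mul_assoc, mul_assoc, ← pow_add, ← pow_add, Int.negOnePow_succ]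
  have h3 : ((j + 1) * (5 * (j + 1) + 1) / 2).toNat + a.toNat =
      (j * (5 * j + 1) / 2).toNat + b.toNat := by omega
  rw [h3]
  push_cast
  ring

theorem thetaCoeff_eq_zero {m : ℕ} (hq : q ^ m = 0) {j : ℤ} (hj : m ≤ j.natAbs) :
    thetaCoeff q j = 0 := by
  rw [thetaCoeff, pow_eq_zero_of_le (by have := natAbs_le_thetaExponent j; omega) hq, mul_zero]


theorem hasFiniteSupport_of_natAbs {f : ℤ → R} (L : ℕ) (h : ∀ j, L < j.natAbs → f j = 0) :
    f.HasFiniteSupport := by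
  refine (Set.finite_Icc (-(L : ℤ)) L).subset fun j hj ↦ ?_
  by_contra hj'
  refine hj (h j ?_)
  rw [Set.mem_Icc] at hj'
  omega

/-- The summands of Schur's finite form of the theta series. -/
def schurTerm (n : ℕ) (j : ℤ) : R :=
  thetaCoeff q j * gaussBinom q n ((n - 5 * j) / 2)

theorem schurTerm_eq_zero (n : ℕ) {j : ℤ} (hj : n < j.natAbs) : schurTerm q n j = 0 := by
  rw [schurTerm]
  rcases lt_or_ge j 0 with h | h
  · rw [gaussBinom_of_lt _ _ (by omega), mul_zero]
  · rw [gaussBinom_of_neg _ _ (by omega), mul_zero]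

theorem hasFiniteSupport_schurTerm (n : ℕ) : (schurTerm q n).HasFiniteSupport :=
  hasFiniteSupport_of_natAbs n fun _ ↦ schurTerm_eq_zero q n

/-- The telescoping certificate for the recurrence satisfied by `schurTerm`. -/
def schurCert (n : ℕ) (j : ℤ) : R :=
  if (n + 1 - 5 * j) % 2 = 0 then
    thetaCoeff q j * q ^ (n + 2 - (n + 1 - 5 * j) / 2).toNat *
      gaussBinom q n ((n + 1 - 5 * j) / 2 - 2)
  else 0

theorem hasFiniteSupport_schurCert (n : ℕ) : (schurCert q n).HasFiniteSupport := by
  refine hasFiniteSupport_of_natAbs (n + 2) fun j hj ↦ ?_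
  rw [schurCert]
  split_ifs with h0
  · rcases lt_or_ge j 0 with h | h
    · rw [gaussBinom_of_lt _ _ (by omega), mul_zero]
    · rw [gaussBinom_of_neg _ _ (by omega), mul_zero]
  · rfl

theorem schurTerm_add_two (n : ℕ) (j : ℤ) :
    schurTerm q (n + 2) j + schurCert q n (j + -1) =
      schurTerm q (n + 1) j + q ^ (n + 1) * schurTerm q n j + schurCert q n j := by
  unfold schurTerm schurCert
  rcases Int.emod_two_eq_zero_or_one (n + 1 - 5 * j) with h | h
  · rw [if_pos h, if_neg (by omega), gaussBinom_succ' q (n + 1)]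
    obtain ⟨k, hk⟩ : ∃ k : ℤ, n + 1 - 5 * j = 2 * k := ⟨(n + 1 - 5 * j) / 2, by omega⟩
    rw [show ((n + 2 : ℕ) - 5 * j) / 2 = k by omega, show ((n + 1 : ℕ) - 5 * j) / 2 = k by omega,
      show (n - 5 * j) / 2 = k - 1 by omega, show (n + 1 - 5 * j) / 2 = k by omega,
      gaussBinom_succ, show k - 1 - 1 = k - 2 by ring,
      show ((n + 1 : ℕ) : ℤ) + 1 - k = n + 2 - k by push_cast; ring]
    have h1 : q ^ ((n : ℤ) + 2 - k).toNat * (q ^ (k - 1).toNat * gaussBinom q n (k - 1)) =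
        q ^ (n + 1) * gaussBinom q n (k - 1) := by
      rcases lt_or_ge k 1 with h | h
      · simp [gaussBinom_of_neg q n (show k - 1 < 0 by omega)]
      rcases lt_or_ge ((n : ℤ) + 1) k with h' | h'
      · simp [gaussBinom_of_lt q n (show (n : ℤ) < k - 1 by omega)]
      rw [← mul_assoc, ← pow_add]
      congr 2
      omega
    linear_combination thetaCoeff q j * h1
  · rw [if_pos (show ((n : ℤ) + 1 - 5 * (j + -1)) % 2 = 0 by omega), if_neg (by omega),
      gaussBinom_succ q (n + 1)]
    obtain ⟨k, hk⟩ : ∃ k : ℤ, n + 1 - 5 * j = 2 * k + 1 := ⟨(n + 1 - 5 * j) / 2, by omega⟩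
    rw [show ((n + 2 : ℕ) - 5 * j) / 2 = k + 1 by omega,
      show ((n + 1 : ℕ) - 5 * j) / 2 = k by omega,
      show (n - 5 * j) / 2 = k by omega, show (n + 1 - 5 * (j + -1)) / 2 = k + 3 by omega,
      gaussBinom_succ' q n (k + 1), show k + 1 - 1 = k by ring, show k + 3 - 2 = k + 1 by ring,
      show (n : ℤ) + 1 - (k + 1) = n - k by ring, show (n : ℤ) + 2 - (k + 3) = n - k - 1 by ring]
    have h1 : q ^ (k + 1).toNat * (q ^ ((n : ℤ) - k).toNat * gaussBinom q n k) =
        q ^ (n + 1) * gaussBinom q n k := by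
      rcases lt_or_ge k 0 with h | h
      · simp [gaussBinom_of_neg q n h]
      rcases lt_or_ge (n : ℤ) k with h' | h'
      · simp [gaussBinom_of_lt q n h']
      rw [← mul_assoc, ← pow_add]
      congr 2
      omega
    have h2 : thetaCoeff q j * q ^ (k + 1).toNat * gaussBinom q n (k + 1) =
        -(thetaCoeff q (j + -1) * q ^ ((n : ℤ) - k - 1).toNat) * gaussBinom q n (k + 1) := by
      rcases lt_or_ge (k + 1) 0 with h | h
      · simp [gaussBinom_of_neg q n h]
      rcases lt_or_ge (n : ℤ) (k + 1) with h' | h'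
      · simp [gaussBinom_of_lt q n h']
      have := thetaCoeff_succ_mul q (j + -1) (a := k + 1) (b := n - k - 1) h (by omega) (by omega)
      rw [neg_add_cancel_right] at this
      rw [this]
    linear_combination thetaCoeff q j * h1 + h2

/-- Schur's polynomials, as alternating sums of Gaussian binomials. -/
noncomputable def schurSum (n : ℕ) : R :=
  ∑ᶠ j, schurTerm q n j

theorem finsum_comp_add_int (f : ℤ → R) (a : ℤ) : ∑ᶠ j, f (j + a) = ∑ᶠ j, f j :=
  finsum_comp_equiv (Equiv.addRight a)

theorem hasFiniteSupport_comp_add_int {f : ℤ → R} (hf : f.HasFiniteSupport) (a : ℤ) :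
    (fun j ↦ f (j + a)).HasFiniteSupport :=
  hf.comp_of_injective (add_left_injective a)

theorem schurSum_zero : schurSum q 0 = 1 := by
  rw [schurSum, finsum_eq_single _ 0 fun j hj ↦ schurTerm_eq_zero q 0 (by omega)]
  simp [schurTerm, thetaCoeff, gaussBinom]

theorem schurSum_one : schurSum q 1 = 1 := by
  rw [schurSum, finsum_eq_single _ 0 fun j hj ↦ ?_]
  · simp [schurTerm, thetaCoeff, gaussBinom]
  · rw [schurTerm]
    rcases lt_or_ge j 0 with h | h
    · rw [gaussBinom_of_lt _ _ (by omega), mul_zero]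
    · rw [gaussBinom_of_neg _ _ (by omega), mul_zero]

theorem schurSum_add_two (n : ℕ) :
    schurSum q (n + 2) = schurSum q (n + 1) + q ^ (n + 1) * schurSum q n := by
  have h := finsum_congr (schurTerm_add_two q n)
  have hc := hasFiniteSupport_schurCert q n
  have hs := hasFiniteSupport_schurTerm q n
  have hs' : (fun j ↦ q ^ (n + 1) * schurTerm q n j).HasFiniteSupport :=
    hs.mul_right (fun _ ↦ q ^ (n + 1))
  rw [finsum_add_distrib (hasFiniteSupport_schurTerm q _)
      (hasFiniteSupport_comp_add_int hc (-1)),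
    finsum_add_distrib (by exact (hasFiniteSupport_schurTerm q _).add hs') hc,
    finsum_add_distrib (hasFiniteSupport_schurTerm q _) hs', ← mul_finsum' _ _ hs] at h
  rw [finsum_comp_add_int] at h
  exact add_right_cancel h

/-- The summands of the finite Jacobi triple product with base `q ^ 5`. -/
def tripleTerm (n : ℕ) (j : ℤ) : R :=
  thetaCoeff q j * gaussBinom (q ^ 5) (2 * n) (n + j)

theorem tripleTerm_eq_zero (n : ℕ) {j : ℤ} (hj : n < j.natAbs) : tripleTerm q n j = 0 := by
  rw [tripleTerm]
  rcases lt_or_ge j 0 with h | h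
  · rw [gaussBinom_of_neg _ _ (by omega), mul_zero]
  · rw [gaussBinom_of_lt _ _ (by push_cast; omega), mul_zero]

theorem hasFiniteSupport_tripleTerm (n : ℕ) : (tripleTerm q n).HasFiniteSupport :=
  hasFiniteSupport_of_natAbs n fun _ ↦ tripleTerm_eq_zero q n

theorem tripleTerm_succ (n : ℕ) (j : ℤ) :
    tripleTerm q (n + 1) j = (1 + q ^ (10 * n + 5)) * tripleTerm q n j +
      -q ^ (5 * n + 3) * tripleTerm q n (j + -1) + -q ^ (5 * n + 2) * tripleTerm q n (j + 1) := by
  unfold tripleTerm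
  rw [show 2 * (n + 1) = 2 * n + 1 + 1 by ring, gaussBinom_succ,
    gaussBinom_succ' _ (2 * n), gaussBinom_succ' _ (2 * n),
    show ((n + 1 : ℕ) : ℤ) + j - 1 = n + j by push_cast; ring,
    show ((n + 1 : ℕ) : ℤ) + j = n + j + 1 by push_cast; ring,
    show ((2 * n : ℕ) : ℤ) + 1 - (n + j) = n + 1 - j by push_cast; ring,
    show ((2 * n : ℕ) : ℤ) + 1 - (n + j + 1) = n - j by push_cast; ring,
    show (n : ℤ) + (j + -1) = n + j - 1 by ring, ← add_assoc]
  have h1 : (q ^ 5) ^ ((n : ℤ) + j + 1).toNat * (q ^ 5) ^ ((n : ℤ) - j).toNat *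
      gaussBinom (q ^ 5) (2 * n) (n + j) =
      q ^ (10 * n + 5) * gaussBinom (q ^ 5) (2 * n) (n + j) := by
    rcases lt_or_ge ((n : ℤ) + j) 0 with h | h
    · simp [gaussBinom_of_neg _ _ h]
    rcases lt_or_ge ((2 * n : ℕ) : ℤ) (n + j) with h' | h'
    · simp [gaussBinom_of_lt _ _ h']
    rw [← pow_mul, ← pow_mul, ← pow_add]
    congr 2
    push_cast at h'
    omega
  have h2 : thetaCoeff q j * (q ^ 5) ^ ((n : ℤ) + 1 - j).toNat *
      gaussBinom (q ^ 5) (2 * n) (n + j - 1) =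
      -(thetaCoeff q (j + -1) * q ^ (5 * n + 3)) * gaussBinom (q ^ 5) (2 * n) (n + j - 1) := by
    rcases lt_or_ge ((2 * n : ℕ) : ℤ) (n + j - 1) with h' | h'
    · simp [gaussBinom_of_lt _ _ h']
    push_cast at h'
    have := thetaCoeff_succ_mul q (j + -1) (a := 5 * (n + 1 - j)) (b := 5 * n + 3) (by omega)
      (by omega) (by ring)
    rw [neg_add_cancel_right, show (5 * (n + 1 - j)).toNat = 5 * ((n : ℤ) + 1 - j).toNat by omega,
      show (5 * (n : ℤ) + 3).toNat = 5 * n + 3 by omega] at this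
    rw [← pow_mul, this]
  have h3 : thetaCoeff q j * (q ^ 5) ^ ((n : ℤ) + j + 1).toNat *
      gaussBinom (q ^ 5) (2 * n) (n + j + 1) =
      -(thetaCoeff q (j + 1) * q ^ (5 * n + 2)) * gaussBinom (q ^ 5) (2 * n) (n + j + 1) := by
    rcases lt_or_ge ((n : ℤ) + j + 1) 0 with h | h
    · simp [gaussBinom_of_neg _ _ h]
    have := thetaCoeff_succ_mul q j (a := 5 * n + 2) (b := 5 * (n + j + 1)) (by omega)
      (by omega) (by ring)
    rw [show (5 * (n + j + 1)).toNat = 5 * ((n : ℤ) + j + 1).toNat by omega,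
      show (5 * (n : ℤ) + 2).toNat = 5 * n + 2 by omega] at this
    rw [← pow_mul, this, neg_neg]
  linear_combination thetaCoeff q j * h1 + h2 + h3

theorem finsum_tripleTerm (n : ℕ) : ∑ᶠ j, tripleTerm q n j =
    ∏ i ∈ Finset.range n, ((1 - q ^ (5 * i + 2)) * (1 - q ^ (5 * i + 3))) := by
  induction n with
  | zero =>
    rw [finsum_eq_single _ 0 fun j hj ↦ tripleTerm_eq_zero q 0 (by omega)]
    simp [tripleTerm, thetaCoeff, gaussBinom]
  | succ n ih =>
    have hs := hasFiniteSupport_tripleTerm q n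
    have hm (c : R) (a : ℤ) : (fun j ↦ c * tripleTerm q n (j + a)).HasFiniteSupport :=
      (hasFiniteSupport_comp_add_int hs a).mul_right (fun _ ↦ c)
    have h0 : (fun j ↦ (1 + q ^ (10 * n + 5)) * tripleTerm q n j).HasFiniteSupport :=
      hs.mul_right (fun _ ↦ (1 + q ^ (10 * n + 5)))
    rw [finsum_congr (tripleTerm_succ q n), finsum_add_distrib (by exact h0.add (hm _ _)) (hm _ _),
      finsum_add_distrib h0 (hm _ _), ← mul_finsum' _ _ hs,
      ← mul_finsum' _ _ (hasFiniteSupport_comp_add_int hs _),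
      ← mul_finsum' _ _ (hasFiniteSupport_comp_add_int hs _), finsum_comp_add_int,
      finsum_comp_add_int, ih, Finset.prod_range_succ]
    ring


theorem qPoch_eq_of_le {m n : ℕ} (hq : q ^ m = 0) (h : m ≤ n) : qPoch q n = qPoch q m := by
  induction n, h using Nat.le_induction with
  | base => rfl
  | succ n hn ih => rw [qPoch_succ, ih, pow_eq_zero_of_le (by omega) hq, sub_zero, mul_one]

theorem isUnit_qPoch {m : ℕ} (hq : q ^ m = 0) (n : ℕ) : IsUnit (qPoch q n) := by
  induction n with
  | zero => simp [qPoch]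
  | succ n ih =>
    rw [qPoch_succ]
    exact ih.mul (IsNilpotent.isUnit_one_sub (IsNilpotent.pow_succ n ⟨m, hq⟩))

theorem gaussBinom_mul_qPoch_eq_one {m n N : ℕ} {k : ℤ} (hq : q ^ m = 0) (hN : m ≤ N)
    (hk : m ≤ k) (hk' : k + m ≤ n) : gaussBinom q n k * qPoch q N = 1 := by
  obtain ⟨a, rfl⟩ := Int.eq_ofNat_of_zero_le (show 0 ≤ k by omega)
  obtain ⟨b, rfl⟩ := Nat.exists_eq_add_of_le (show a ≤ n by omega)
  have h := gaussBinom_mul_qPoch q a b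
  rw [qPoch_eq_of_le q hq (show m ≤ a by omega), qPoch_eq_of_le q hq (show m ≤ b by omega),
    qPoch_eq_of_le q hq (show m ≤ a + b by omega)] at h
  rw [qPoch_eq_of_le q hq hN]
  exact (isUnit_qPoch q hq m).mul_right_cancel (by rw [h, one_mul])

theorem schurSum_mul_qPoch {m n N : ℕ} (hq : q ^ m = 0) (hn : 7 * m + 2 ≤ n) (hN : m ≤ N) :
    schurSum q n * qPoch q N = ∑ᶠ j, thetaCoeff q j := by
  rw [schurSum, finsum_mul' _ _ (hasFiniteSupport_schurTerm q n)]
  refine finsum_congr fun j ↦ ?_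
  rw [schurTerm]
  rcases le_or_gt m j.natAbs with h | h
  · simp [thetaCoeff_eq_zero q hq h]
  · rw [mul_assoc, gaussBinom_mul_qPoch_eq_one q hq hN (by omega) (by omega), mul_one]

theorem finsum_tripleTerm_mul_qPoch {m n N : ℕ} (hq : q ^ m = 0) (hn : 2 * m ≤ n) (hN : m ≤ N) :
    (∑ᶠ j, tripleTerm q n j) * qPoch (q ^ 5) N = ∑ᶠ j, thetaCoeff q j := by
  rw [finsum_mul' _ _ (hasFiniteSupport_tripleTerm q n)]
  refine finsum_congr fun j ↦ ?_
  rw [tripleTerm]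
  rcases le_or_gt m j.natAbs with h | h
  · simp [thetaCoeff_eq_zero q hq h]
  · have hq' : (q ^ 5) ^ m = 0 := by rw [pow_right_comm, hq, zero_pow (by norm_num)]
    rw [mul_assoc, gaussBinom_mul_qPoch_eq_one _ hq' hN (by omega) (by push_cast; omega), mul_one]

theorem qPoch_five_mul (n : ℕ) : qPoch q (5 * n) =
    (∏ i ∈ Finset.range n, ((1 - q ^ (5 * i + 1)) * (1 - q ^ (5 * i + 4)))) *
      ((∏ i ∈ Finset.range n, ((1 - q ^ (5 * i + 2)) * (1 - q ^ (5 * i + 3)))) *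
        qPoch (q ^ 5) n) := by
  induction n with
  | zero => simp [qPoch]
  | succ n ih =>
    rw [show 5 * (n + 1) = 5 * n + 1 + 1 + 1 + 1 + 1 by ring]
    simp only [qPoch_succ, Finset.prod_range_succ, ih]
    ring

theorem schurSum_mul_prod {m n N : ℕ} (hq : q ^ m = 0) (hn : 7 * m + 2 ≤ n) (hN : 2 * m ≤ N) :
    schurSum q n * ∏ i ∈ Finset.range N, ((1 - q ^ (5 * i + 1)) * (1 - q ^ (5 * i + 4))) = 1 := by
  have h1 := schurSum_mul_qPoch q (N := 5 * N) hq hn (by omega)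
  rw [← finsum_tripleTerm_mul_qPoch q hq hN (show m ≤ N by omega), finsum_tripleTerm] at h1
  have h2 := isUnit_qPoch q hq (5 * N)
  rw [qPoch_five_mul] at h1 h2
  refine (isUnit_of_mul_isUnit_right h2).mul_right_cancel ?_
  rw [mul_assoc, h1, one_mul]

end

/-- The subsets of `{1, …, n}` without two consecutive elements. -/
def gapSets (n : ℕ) : Finset (Finset ℕ) :=
  (Finset.Icc 1 n).powerset.filter fun s ↦ ∀ a ∈ s, a + 1 ∉ s

theorem mem_gapSets {n : ℕ} {s : Finset ℕ} :
    s ∈ gapSets n ↔ (∀ a ∈ s, 1 ≤ a ∧ a ≤ n) ∧ ∀ a ∈ s, a + 1 ∉ s := by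
  simp [gapSets, Finset.subset_iff]

theorem gapSets_add_two (n : ℕ) :
    gapSets (n + 2) = gapSets (n + 1) ∪ (gapSets n).image (insert (n + 2)) := by
  ext s
  simp only [Finset.mem_union, Finset.mem_image, mem_gapSets]
  constructor
  · rintro ⟨h1, h2⟩
    by_cases hs : n + 2 ∈ s
    · refine Or.inr ⟨s.erase (n + 2), ⟨fun a ha ↦ ?_, fun a ha ↦ ?_⟩, Finset.insert_erase hs⟩
      · rw [Finset.mem_erase] at ha
        have := h1 a ha.2
        have : a ≠ n + 1 := by rintro rfl; exact h2 _ ha.2 hs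
        omega
      · exact fun h ↦ h2 a (Finset.mem_of_mem_erase ha) (Finset.mem_of_mem_erase h)
    · refine Or.inl ⟨fun a ha ↦ ?_, h2⟩
      have := h1 a ha
      have : a ≠ n + 2 := by rintro rfl; exact hs ha
      omega
  · rintro (⟨h1, h2⟩ | ⟨t, ⟨h1, h2⟩, rfl⟩)
    · exact ⟨fun a ha ↦ by have := h1 a ha; omega, h2⟩
    · constructor <;> intro a ha <;> grind

theorem sum_gapSets {R : Type*} [CommRing R] (q : R) (n : ℕ) :
    ∑ s ∈ gapSets n, q ^ (∑ a ∈ s, a) = schurSum q (n + 1) := by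
  induction n using Nat.twoStepInduction with
  | zero =>
    have : gapSets 0 = {∅} := by decide
    simp [this, schurSum_one]
  | one =>
    have : gapSets 1 = {∅, {1}} := by decide
    rw [this, schurSum_add_two, schurSum_one, schurSum_zero]
    simp
  | more n ih1 ih2 =>
    have hmem {s} (hs : s ∈ gapSets n) : n + 2 ∉ s := fun h ↦ by
      have := (mem_gapSets.1 hs).1 _ h
      omega
    rw [gapSets_add_two, Finset.sum_union, Finset.sum_image, ih2, schurSum_add_two q (n + 1),
      ← ih1, Finset.mul_sum]
    · congr 1
      refine Finset.sum_congr rfl fun s hs ↦ ?_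
      rw [Finset.sum_insert (hmem hs), pow_add]
    · intro s hs t ht h
      rw [← Finset.erase_insert (hmem hs), ← Finset.erase_insert (hmem ht)]
      exact congrArg (Finset.erase · (n + 2)) h
    · rw [Finset.disjoint_left]
      intro s hs hs'
      obtain ⟨t, -, rfl⟩ := Finset.mem_image.1 hs'
      have := (mem_gapSets.1 hs).1 _ (Finset.mem_insert_self _ _)
      omega

theorem ncard_gap_partitions {n N : ℕ} (hN : n ≤ N) :
    Set.ncard {p : n.Partition | p.parts.Nodup ∧ ∀ a ∈ p.parts, ∀ b ∈ p.parts, a ≠ b + 1} =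
      ((gapSets N).filter fun s ↦ ∑ a ∈ s, a = n).card := by
  rw [← Set.ncard_coe_finset]
  refine Set.ncard_congr (fun p _ ↦ p.parts.toFinset) ?_ ?_ ?_
  · rintro p ⟨h1, h2⟩
    simp only [Finset.coe_filter, Set.mem_ofPred_eq, mem_gapSets, Multiset.mem_toFinset]
    refine ⟨⟨fun a ha ↦ ⟨p.parts_pos ha, (p.le_of_mem_parts ha).trans hN⟩,
      fun a ha h ↦ h2 _ h _ ha rfl⟩, ?_⟩
    rw [Finset.sum, Multiset.toFinset_val, h1.dedup, Multiset.map_id', p.parts_sum]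
  · rintro p p' ⟨h, -⟩ ⟨h', -⟩ hp
    have := congrArg Finset.val hp
    rw [Multiset.toFinset_val, Multiset.toFinset_val, h.dedup, h'.dedup] at this
    exact Nat.Partition.ext this
  · intro s hs
    simp only [Finset.coe_filter, Set.mem_ofPred_eq, mem_gapSets] at hs
    obtain ⟨⟨h1, h2⟩, h3⟩ := hs
    refine ⟨⟨s.val, fun {a} ha ↦ (h1 a ha).1, ?_⟩, ⟨s.nodup, fun a ha b hb h ↦ ?_⟩, ?_⟩
    · rw [← h3, Finset.sum, Multiset.map_id']
    · exact h2 b hb (h ▸ ha)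
    · exact Finset.val_toFinset s

open PowerSeries PowerSeries.WithPiTopology in
theorem eventually_X_pow_dvd_card_restricted_mul_prod (p : ℕ → Prop) [DecidablePred p] (d : ℕ) :
    ∀ᶠ N in Filter.atTop, (X : ℤ⟦X⟧) ^ d ∣
      PowerSeries.mk (fun n ↦ ((Nat.Partition.restricted n p).card : ℤ)) *
        (∏ i ∈ Finset.range N, if p (i + 1) then 1 - X ^ (i + 1) else 1) - 1 := by
  have h := (Nat.Partition.hasProd_powerSeriesMk_card_restricted ℤ p).tendsto_prod_nat
  rw [tendsto_iff_coeff_tendsto] at h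
  simp only [nhds_discrete, Filter.tendsto_pure] at h
  filter_upwards [(Filter.eventually_all_finset (Finset.range d)).2 fun k _ ↦ h k] with N hN
  set P : ℤ⟦X⟧ := ∏ i ∈ Finset.range N, if p (i + 1) then 1 - X ^ (i + 1) else 1
  have hP : (∏ i ∈ Finset.range N, if p (i + 1) then ∑' j : ℕ, (X : ℤ⟦X⟧) ^ ((i + 1) * j) else 1) *
      P = 1 := by
    rw [← Finset.prod_mul_distrib]
    refine Finset.prod_eq_one fun i _ ↦ ?_
    split_ifs
    · simp_rw [pow_mul]
      exact tsum_pow_mul_one_sub_of_constantCoeff_eq_zero (by simp)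
    · simp
  rw [← hP, ← sub_mul]
  refine Dvd.dvd.mul_right (X_pow_dvd_iff.2 fun k hk ↦ ?_) _
  rw [map_sub, hN k (Finset.mem_range.2 hk), sub_self]

theorem prod_range_five_mul {R : Type*} [CommRing R] (q : R) (n : ℕ) :
    (∏ i ∈ Finset.range (5 * n),
      if (i + 1) % 5 = 1 ∨ (i + 1) % 5 = 4 then 1 - q ^ (i + 1) else 1) =
      ∏ i ∈ Finset.range n, ((1 - q ^ (5 * i + 1)) * (1 - q ^ (5 * i + 4))) := by
  induction n with
  | zero => simp
  | succ n ih =>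
    rw [show 5 * (n + 1) = 5 * n + 1 + 1 + 1 + 1 + 1 by ring]
    simp only [Finset.prod_range_succ, ih]
    rw [if_pos (by omega), if_neg (by omega), if_neg (by omega), if_pos (by omega),
      if_neg (by omega)]
    ring

open PowerSeries in
theorem X_pow_dvd_sum_gapSets_sub {m N : ℕ} (hN : 7 * m + 2 ≤ N) (F : ℤ⟦X⟧)
    (hF : X ^ m ∣
      F * ∏ i ∈ Finset.range N, ((1 - X ^ (5 * i + 1)) * (1 - X ^ (5 * i + 4))) - 1) :
    X ^ m ∣ ∑ s ∈ gapSets N, X ^ (∑ a ∈ s, a) - F := by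
  rw [← Ideal.mem_span_singleton, ← Ideal.Quotient.eq] at hF ⊢
  have hq : Ideal.Quotient.mk (Ideal.span {(X : ℤ⟦X⟧) ^ m}) X ^ m = 0 := by
    rw [← map_pow, Ideal.Quotient.eq_zero_iff_mem]
    exact Ideal.mem_span_singleton_self _
  generalize Ideal.Quotient.mk (Ideal.span {(X : ℤ⟦X⟧) ^ m}) = φ at hF hq ⊢
  have hsum := schurSum_mul_prod (φ X) (n := N + 1) (N := N) hq (by omega) (by omega)
  rw [← sum_gapSets] at hsum
  simp only [map_mul, map_prod, map_sub, map_one, map_pow] at hF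
  rw [map_sum]
  simp only [map_pow]
  exact left_inv_eq_right_inv hsum (by rw [mul_comm]; exact hF)

/-- The first Rogers–Ramanujan identity: the number of partitions of `n` into
distinct parts no two of which are consecutive equals the number of partitions
of `n` into parts congruent to `1` or `4` modulo `5`. -/
theorem rogers_ramanujan_first (n : ℕ) :
    Set.ncard {p : n.Partition |
        p.parts.Nodup ∧ ∀ a ∈ p.parts, ∀ b ∈ p.parts, a ≠ b + 1}
      = Set.ncard {p : n.Partition | ∀ a ∈ p.parts, a % 5 = 1 ∨ a % 5 = 4} := by
  obtain ⟨N, hdvd, hN⟩ :=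
    (((Filter.tendsto_id.const_mul_atTop' (show 0 < 5 by norm_num)).eventually
      (eventually_X_pow_dvd_card_restricted_mul_prod (fun a ↦ a % 5 = 1 ∨ a % 5 = 4) (n + 1))).and
      (Filter.eventually_ge_atTop (7 * (n + 1) + 2))).exists
  simp only [id_eq, prod_range_five_mul] at hdvd
  have h := PowerSeries.X_pow_dvd_iff.1 (X_pow_dvd_sum_gapSets_sub hN _ hdvd) n n.lt_succ_self
  rw [map_sub, sub_eq_zero, map_sum, PowerSeries.coeff_mk] at h
  simp only [PowerSeries.coeff_X_pow, Finset.sum_boole, Nat.cast_inj] at h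
  rw [ncard_gap_partitions (show n ≤ N by omega)]
  simp only [eq_comm (b := n)]
  rw [h, ← Set.ncard_coe_finset]
  simp [Nat.Partition.restricted]
end

section
/- With parameters d ≥ 1, k ≥ 1, 0 ≤ a ≤ k, 1 ≤ e ≤ d: \overline{U}_{dk+e,da+d}(x) − \overline{U}_{dk+e,d(a−1)+d}(x) = (xq)^{da} U_{dk+e,d(k−a)+e}(xq) + (xq)^{da+d} U_{dk+e,d(k−a−1)+e}(xq). -/
/-- An overpartition recorded by a pair of multiplicity functions:
`p.1 i` is the number of non-overlined occurrences of the part `i` and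
`p.2 i ∈ {0, 1}` is the number of overlined occurrences of `i`.
There are no parts equal to `0`. -/
def IsOverPtn (p : (ℕ →₀ ℕ) × (ℕ →₀ ℕ)) : Prop :=
  p.1 0 = 0 ∧ p.2 0 = 0 ∧ ∀ i, p.2 i ≤ 1

/-- The number of parts of an overpartition. -/
def opParts (p : (ℕ →₀ ℕ) × (ℕ →₀ ℕ)) : ℕ :=
  (p.1.sum fun _ v => v) + (p.2.sum fun _ v => v)

/-- The weight (number partitioned) of an overpartition. -/
def opWt (p : (ℕ →₀ ℕ) × (ℕ →₀ ℕ)) : ℕ :=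
  (p.1.sum fun i v => i * v) + (p.2.sum fun i v => i * v)

/-- Conditions (i)-(iv) of Definition 1.6 (Kursungoz–Zadehdabbagh), with modulus `d`,
first index `N = dk + e` and second index `M = da + f`: writing `f_i = p.1 i`,
`f_{ī} = p.2 i`,
(i) `f_1 ≤ M - 1 + (d-1) f_{1̄}`;
(ii) `f_{2l-1} ≥ (d-1) f_{\overline{2l-1}}`;
(iii) `f_{2l} + f_{\overline{2l}} ≡ 0 (mod d)`;
(iv) `f_l + f_{l̄} + f_{l+1} ≤ N - 1 + (d-1) f_{\overline{l+1}}` for all `l ≥ 1`. -/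
def uCond (d N M : ℕ) (p : (ℕ →₀ ℕ) × (ℕ →₀ ℕ)) : Prop :=
  p.1 1 + 1 ≤ M + (d - 1) * p.2 1 ∧
  (∀ l : ℕ, (d - 1) * p.2 (2 * l + 1) ≤ p.1 (2 * l + 1)) ∧
  (∀ l : ℕ, d ∣ p.1 (2 * l + 2) + p.2 (2 * l + 2)) ∧
  (∀ l : ℕ, 1 ≤ l → p.1 l + p.2 l + p.1 (l + 1) + 1 ≤ N + (d - 1) * p.2 (l + 1))

/-- Conditions (ī)-(iv̄): as `uCond` with the parity roles of odd and even parts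
swapped in the second and third conditions. -/
def ubarCond (d N M : ℕ) (p : (ℕ →₀ ℕ) × (ℕ →₀ ℕ)) : Prop :=
  p.1 1 + 1 ≤ M + (d - 1) * p.2 1 ∧
  (∀ l : ℕ, (d - 1) * p.2 (2 * l + 2) ≤ p.1 (2 * l + 2)) ∧
  (∀ l : ℕ, d ∣ p.1 (2 * l + 1) + p.2 (2 * l + 1)) ∧
  (∀ l : ℕ, 1 ≤ l → p.1 l + p.2 l + p.1 (l + 1) + 1 ≤ N + (d - 1) * p.2 (l + 1))

/-- `u_{N, M}(m, n)`: the number of overpartitions of `n` into `m` parts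
satisfying conditions (i)-(iv). -/
noncomputable def uCount (d N M m n : ℕ) : ℕ :=
  Set.ncard {p : (ℕ →₀ ℕ) × (ℕ →₀ ℕ) |
    IsOverPtn p ∧ opParts p = m ∧ opWt p = n ∧ uCond d N M p}

/-- `ū_{N, M}(m, n)`: the number of overpartitions of `n` into `m` parts
satisfying conditions (ī)-(iv̄). -/
noncomputable def ubarCount (d N M m n : ℕ) : ℕ :=
  Set.ncard {p : (ℕ →₀ ℕ) × (ℕ →₀ ℕ) |
    IsOverPtn p ∧ opParts p = m ∧ opWt p = n ∧ ubarCond d N M p}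

/-- The two-variable generating function `U_{N,M}(x) = Σ u_{N,M}(m,n) x^m q^n`. -/
noncomputable def Ugf (d N M : ℕ) (x q : ℂ) : ℂ :=
  ∑' mn : ℕ × ℕ, (uCount d N M mn.1 mn.2 : ℂ) * x ^ mn.1 * q ^ mn.2

/-- The two-variable generating function `Ū_{N,M}(x) = Σ ū_{N,M}(m,n) x^m q^n`. -/
noncomputable def UbarGf (d N M : ℕ) (x q : ℂ) : ℂ :=
  ∑' mn : ℕ × ℕ, (ubarCount d N M mn.1 mn.2 : ℂ) * x ^ mn.1 * q ^ mn.2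

/-- The infinite q-Pochhammer symbol `(a; q)_∞ = ∏_{j ≥ 0} (1 - a q^j)`. -/
noncomputable def qPochInf (a q : ℂ) : ℂ := ∏' j : ℕ, (1 - a * q ^ j)

/-- The finite q-Pochhammer symbol `(a; q)_n = ∏_{j=0}^{n-1} (1 - a q^j)`. -/
noncomputable def qPochFin (a q : ℂ) (n : ℕ) : ℂ := ∏ j ∈ Finset.range n, (1 - a * q ^ j)

open Finset in
theorem sum_range_pow_le_inv_one_sub {r : ℝ} (h0 : 0 ≤ r) (h1 : r < 1) (n : ℕ) :
    ∑ i ∈ range n, r ^ i ≤ (1 - r)⁻¹ := by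
  rw [← tsum_geometric_of_lt_one h0 h1]
  exact (summable_geometric_of_lt_one h0 h1).sum_le_tsum _ fun i _ => pow_nonneg h0 i

open Finset in
theorem summable_pow_weight {r : ℝ} (h0 : 0 ≤ r) (h1 : r < 1) :
    Summable fun f : {f : ℕ →₀ ℕ // f 0 = 0} => r ^ (f.1.sum fun i v => i * v) := by
  have h1' : 0 < 1 - r := by linarith
  refine summable_of_sum_le (c := Real.exp ((1 - r)⁻¹ * (1 - r)⁻¹))
    (fun f => pow_nonneg h0 _) fun S => ?_
  obtain ⟨n, hn⟩ : ∃ n, ∀ f ∈ S, f.1.support ⊆ range n := by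
    obtain ⟨n, hn⟩ := (S.biUnion fun f => f.1.support).exists_nat_subset_range
    exact ⟨n, fun f hf => (subset_biUnion_of_mem (fun f : {f : ℕ →₀ ℕ // f 0 = 0} =>
      f.1.support) hf).trans hn⟩
  obtain ⟨B, hB⟩ : ∃ B, ∀ f ∈ S, ∀ i ∈ range n, f.1 i < B := by
    obtain ⟨B, hB⟩ := (S.biUnion fun f => (range n).image f.1).exists_nat_subset_range
    refine ⟨B, fun f hf i hi => mem_range.1 (hB ?_)⟩
    exact mem_biUnion.2 ⟨f, hf, mem_image_of_mem _ hi⟩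
  let t : Fin n → Finset ℕ := fun i => if (i : ℕ) = 0 then {0} else range B
  have hle : ∑ f ∈ S, r ^ (f.1.sum fun i v => i * v)
      ≤ ∑ g ∈ Fintype.piFinset t, ∏ i : Fin n, r ^ ((i : ℕ) * g i) := by
    have hinj : Set.InjOn (fun (f : {f : ℕ →₀ ℕ // f 0 = 0}) (i : Fin n) => f.1 i) S := by
      intro f hf g hg hfg
      ext i
      by_cases hi : i < n
      · exact congrFun hfg ⟨i, hi⟩
      · rw [Finsupp.notMem_support_iff.1 fun h => hi (mem_range.1 (hn f hf h)),
          Finsupp.notMem_support_iff.1 fun h => hi (mem_range.1 (hn g hg h))]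
    have hsum : ∑ f ∈ S, r ^ (f.1.sum fun i v => i * v)
        = ∑ g ∈ S.image (fun f (i : Fin n) => f.1 i), ∏ i : Fin n, r ^ ((i : ℕ) * g i) := by
      rw [sum_image hinj]
      refine sum_congr rfl fun f hf => ?_
      rw [Finsupp.sum_of_support_subset _ (hn f hf) _ (by simp), ← prod_pow_eq_pow_sum,
        prod_range]
    rw [hsum]
    refine sum_le_sum_of_subset_of_nonneg ?_ fun g _ _ => prod_nonneg fun i _ => pow_nonneg h0 _
    intro g hg
    obtain ⟨f, hf, rfl⟩ := mem_image.1 hg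
    refine Fintype.mem_piFinset.2 fun i => ?_
    by_cases hi : (i : ℕ) = 0
    · simp [t, hi, f.2]
    · simpa [t, hi] using hB f hf i (mem_range.2 i.2)
  refine hle.trans ?_
  rw [← prod_univ_sum t fun i v => r ^ ((i : ℕ) * v)]
  have hfac : ∀ i : Fin n, ∑ v ∈ t i, r ^ ((i : ℕ) * v) ≤ Real.exp (r ^ (i : ℕ) * (1 - r)⁻¹) := by
    intro i
    by_cases hi : (i : ℕ) = 0
    · simpa [t, hi] using h1.le
    · have hri : r ^ (i : ℕ) ≤ r := pow_le_of_le_one h0 h1.le hi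
      have hi0 : 0 ≤ r ^ (i : ℕ) := pow_nonneg h0 _
      have hi1 : 0 < 1 - r ^ (i : ℕ) := by linarith
      calc ∑ v ∈ t i, r ^ ((i : ℕ) * v) = ∑ v ∈ range B, (r ^ (i : ℕ)) ^ v := by
            simp [t, hi, pow_mul]
        _ ≤ (1 - r ^ (i : ℕ))⁻¹ := sum_range_pow_le_inv_one_sub hi0 (by linarith) _
        _ = r ^ (i : ℕ) * (1 - r ^ (i : ℕ))⁻¹ + 1 := by field_simp; ring
        _ ≤ r ^ (i : ℕ) * (1 - r)⁻¹ + 1 := by gcongr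
        _ ≤ _ := Real.add_one_le_exp _
  refine (prod_le_prod (fun i _ => sum_nonneg fun v _ => pow_nonneg h0 _)
    fun i _ => hfac i).trans ?_
  rw [← Real.exp_sum, ← sum_mul, Fin.sum_univ_eq_sum_range (fun i => r ^ i)]
  exact Real.exp_le_exp.2 (mul_le_mul_of_nonneg_right
    (sum_range_pow_le_inv_one_sub h0 h1 n) (inv_nonneg.2 h1'.le))

/-- The monomial `x ^ (number of parts) * q ^ (weight)` attached to an overpartition. -/
def opTerm (x q : ℂ) (p : (ℕ →₀ ℕ) × (ℕ →₀ ℕ)) : ℂ := x ^ opParts p * q ^ opWt p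

theorem summable_opTerm {x q : ℂ} (hx : ‖x‖ ≤ 1) (hq : ‖q‖ < 1)
    {S : Set ((ℕ →₀ ℕ) × (ℕ →₀ ℕ))} (hS : ∀ p ∈ S, IsOverPtn p) :
    Summable fun p : S => opTerm x q p := by
  have h := summable_pow_weight (norm_nonneg q) hq
  have h2 := h.mul_of_nonneg h (fun f => pow_nonneg (norm_nonneg q) _)
    fun f => pow_nonneg (norm_nonneg q) _
  let j : S → {f : ℕ →₀ ℕ // f 0 = 0} × {f : ℕ →₀ ℕ // f 0 = 0} :=
    fun p => (⟨p.1.1, (hS p p.2).1⟩, ⟨p.1.2, (hS p p.2).2.1⟩)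
  have hj : Function.Injective j := by
    intro p p' hpp
    have h1 := congrArg (fun z => z.1.1) hpp
    have h2 := congrArg (fun z => z.2.1) hpp
    exact Subtype.ext (Prod.ext h1 h2)
  refine Summable.of_norm_bounded (h2.comp_injective hj) fun p => ?_
  simp only [opTerm, norm_mul, norm_pow, Function.comp, j, ← pow_add]
  exact mul_le_of_le_one_left (pow_nonneg (norm_nonneg q) _) (pow_le_one₀ (norm_nonneg x) hx)

theorem tsum_ncard_mul_pow {x q : ℂ} (hx : ‖x‖ ≤ 1) (hq : ‖q‖ < 1)
    (P : (ℕ →₀ ℕ) × (ℕ →₀ ℕ) → Prop) :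
    ∑' mn : ℕ × ℕ, (Set.ncard {p | IsOverPtn p ∧ opParts p = mn.1 ∧ opWt p = mn.2 ∧ P p} : ℂ)
        * x ^ mn.1 * q ^ mn.2
      = ∑' p : {p | IsOverPtn p ∧ P p}, opTerm x q p := by
  have h := (summable_opTerm hx hq (S := {p | IsOverPtn p ∧ P p}) fun p hp => hp.1).hasSum
  rw [← (h.tsum_fiberwise fun p => (opParts p.1, opWt p.1)).tsum_eq]
  refine tsum_congr fun ⟨m, n⟩ => ?_
  have hc : ∀ p : (fun p : {p | IsOverPtn p ∧ P p} => (opParts p.1, opWt p.1)) ⁻¹' {(m, n)},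
      opTerm x q p.1.1 = x ^ m * q ^ n := by
    rintro ⟨p, hp⟩
    obtain ⟨h1, h2⟩ := Prod.mk.inj hp
    simp only [opTerm, h1, h2]
  rw [tsum_congr hc, tsum_const, nsmul_eq_mul, mul_assoc]
  congr 2
  rw [Nat.card_coe_set_eq, ← Set.ncard_image_of_injective _ Subtype.val_injective]
  congr 1
  ext p
  simp only [Set.mem_ofPred_eq, Set.mem_image, Set.mem_preimage, Set.mem_singleton_iff,
    Prod.mk.injEq, Subtype.exists, exists_and_right, exists_eq_right]
  tauto

/-- Shift every part of `f` up by one and add `j` new parts equal to `1`. -/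
noncomputable def shiftAdd (j : ℕ) (f : ℕ →₀ ℕ) : ℕ →₀ ℕ :=
  f.mapDomain Nat.succ + Finsupp.single 1 j

theorem shiftAdd_zero (j : ℕ) (f : ℕ →₀ ℕ) : shiftAdd j f 0 = 0 := by
  simp [shiftAdd, Finsupp.mapDomain_of_notMem_range]

theorem shiftAdd_succ (j : ℕ) (f : ℕ →₀ ℕ) (n : ℕ) :
    shiftAdd j f (n + 1) = f n + Finsupp.single 1 j (n + 1) := by
  rw [shiftAdd, Finsupp.add_apply, ← Nat.succ_eq_add_one,
    Finsupp.mapDomain_apply Nat.succ_injective]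

theorem shiftAdd_one (j : ℕ) (f : ℕ →₀ ℕ) : shiftAdd j f 1 = f 0 + j := by
  simpa using shiftAdd_succ j f 0

theorem shiftAdd_add_two (j : ℕ) (f : ℕ →₀ ℕ) (n : ℕ) : shiftAdd j f (n + 2) = f (n + 1) := by
  simpa using shiftAdd_succ j f (n + 1)

theorem shiftAdd_injective (j : ℕ) : Function.Injective (shiftAdd j) :=
  fun _ _ h => Finsupp.mapDomain_injective Nat.succ_injective (add_right_cancel h)

theorem exists_shiftAdd_eq {f : ℕ →₀ ℕ} (hf : f 0 = 0) :
    ∃ g : ℕ →₀ ℕ, g 0 = 0 ∧ shiftAdd (f 1) g = f := by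
  refine ⟨(f.comapDomain Nat.succ Nat.succ_injective.injOn).erase 0, by simp, ?_⟩
  ext n
  rcases n with _ | _ | n
  · rw [shiftAdd_zero, hf]
  · simp [shiftAdd_one]
  · rw [shiftAdd_add_two, Finsupp.erase_ne (by omega)]
    simp

theorem sum_shiftAdd (j : ℕ) (f : ℕ →₀ ℕ) :
    ((shiftAdd j f).sum fun _ v => v) = (f.sum fun _ v => v) + j := by
  rw [shiftAdd, Finsupp.sum_add_index' (by simp) (by simp),
    Finsupp.sum_mapDomain_index (by simp) (by simp)]
  simp

theorem sum_mul_shiftAdd (j : ℕ) (f : ℕ →₀ ℕ) :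
    ((shiftAdd j f).sum fun i v => i * v)
      = (f.sum fun i v => i * v) + (f.sum fun _ v => v) + j := by
  rw [shiftAdd, Finsupp.sum_add_index' (by simp) (by simp [mul_add]),
    Finsupp.sum_mapDomain_index (by simp) (by simp [mul_add]), ← Finsupp.sum_add]
  simp [Nat.succ_eq_add_one, add_mul]

/-- Shift every part of an overpartition up by one, then add `j` non-overlined and
`b` overlined parts equal to `1`. -/
noncomputable def opShift (j b : ℕ) (p : (ℕ →₀ ℕ) × (ℕ →₀ ℕ)) : (ℕ →₀ ℕ) × (ℕ →₀ ℕ) :=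
  (shiftAdd j p.1, shiftAdd b p.2)

theorem opShift_injective (j b : ℕ) : Function.Injective (opShift j b) := by
  intro p p' h
  exact Prod.ext (shiftAdd_injective j (congrArg Prod.fst h))
    (shiftAdd_injective b (congrArg Prod.snd h))

theorem opTerm_opShift (x q : ℂ) (j b : ℕ) (p : (ℕ →₀ ℕ) × (ℕ →₀ ℕ)) :
    opTerm x q (opShift j b p) = (x * q) ^ (j + b) * opTerm (x * q) q p := by
  simp only [opTerm, opParts, opWt, opShift, sum_shiftAdd, sum_mul_shiftAdd]
  ring

theorem isOverPtn_opShift {j b : ℕ} {p : (ℕ →₀ ℕ) × (ℕ →₀ ℕ)} (hp : IsOverPtn p) (hb : b ≤ 1) :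
    IsOverPtn (opShift j b p) := by
  refine ⟨shiftAdd_zero _ _, shiftAdd_zero _ _, fun i => ?_⟩
  rcases i with _ | _ | i
  · simp [opShift, shiftAdd_zero]
  · simpa [opShift, shiftAdd_one, hp.2.1] using hb
  · simpa [opShift, shiftAdd_add_two] using hp.2.2 (i + 1)

theorem exists_opShift_eq {p : (ℕ →₀ ℕ) × (ℕ →₀ ℕ)} (hp : IsOverPtn p) :
    ∃ p', IsOverPtn p' ∧ opShift (p.1 1) (p.2 1) p' = p := by
  obtain ⟨f, hf0, hf⟩ := exists_shiftAdd_eq hp.1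
  obtain ⟨g, hg0, hg⟩ := exists_shiftAdd_eq hp.2.1
  refine ⟨(f, g), ⟨hf0, hg0, fun i => ?_⟩, Prod.ext hf hg⟩
  rcases i with _ | i
  · simp [hg0]
  · have := hp.2.2 (i + 2)
    rwa [← hg, shiftAdd_add_two] at this

/-- Prepending parts equal to `1` turns the conditions with the roles of the parities in one
order into those with the roles swapped. -/
theorem ubarCond_opShift_iff {d N M j b : ℕ} {p : (ℕ →₀ ℕ) × (ℕ →₀ ℕ)} (hp : IsOverPtn p) :
    ubarCond d N M (opShift j b p) ↔
      (j + 1 ≤ M + (d - 1) * b ∧ d ∣ j + b ∧ j + b + p.1 1 + 1 ≤ N + (d - 1) * p.2 1) ∧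
      (∀ l : ℕ, (d - 1) * p.2 (2 * l + 1) ≤ p.1 (2 * l + 1)) ∧
      (∀ l : ℕ, d ∣ p.1 (2 * l + 2) + p.2 (2 * l + 2)) ∧
      (∀ l : ℕ, 1 ≤ l → p.1 l + p.2 l + p.1 (l + 1) + 1 ≤ N + (d - 1) * p.2 (l + 1)) := by
  have h0 := hp.1
  have h0' := hp.2.1
  simp only [ubarCond, opShift, shiftAdd_one, h0, h0', zero_add]
  constructor
  · rintro ⟨h1, h2, h3, h4⟩
    refine ⟨⟨h1, ?_, ?_⟩, fun l => ?_, fun l => ?_, fun l hl => ?_⟩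
    · simpa [shiftAdd_one, h0, h0'] using h3 0
    · simpa [shiftAdd_one, shiftAdd_add_two _ _ 0, h0, h0'] using h4 1 le_rfl
    · simpa [shiftAdd_add_two] using h2 l
    · simpa [show 2 * (l + 1) + 1 = (2 * l + 1) + 2 by ring, shiftAdd_add_two] using h3 (l + 1)
    · obtain ⟨l, rfl⟩ := Nat.exists_eq_add_of_le' hl
      simpa [show l + 1 + 1 + 1 = (l + 1) + 2 by ring, shiftAdd_add_two] using
        h4 (l + 1 + 1) (by omega)
  · rintro ⟨⟨h1, h2, h3⟩, h4, h5, h6⟩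
    refine ⟨h1, fun l => ?_, fun l => ?_, fun l hl => ?_⟩
    · simpa [shiftAdd_add_two] using h4 l
    · rcases l with _ | l
      · simpa [shiftAdd_one, h0, h0'] using h2
      · simpa [show 2 * (l + 1) + 1 = (2 * l + 1) + 2 by ring, shiftAdd_add_two] using h5 l
    · rcases l with _ | _ | l
      · omega
      · simpa [shiftAdd_one, shiftAdd_add_two _ _ 0, h0, h0'] using h3
      · simpa [show l + 1 + 1 + 1 = (l + 1) + 2 by ring, shiftAdd_add_two] using
          h6 (l + 1) (by omega)

theorem setOf_ubarCond_eq_union {d k e a : ℕ} (hd : 1 ≤ d) (hak : a ≤ k) (he1 : 1 ≤ e)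
    (hed : e ≤ d) :
    {p | IsOverPtn p ∧ ubarCond d (d * k + e) (d * a + d) p}
      = {p | IsOverPtn p ∧ ubarCond d (d * k + e) (d * a) p} ∪
        (opShift (d * a) 0 '' {p | IsOverPtn p ∧ uCond d (d * k + e) (d * (k - a) + e) p} ∪
         opShift (d * a + (d - 1)) 1 ''
          {p | IsOverPtn p ∧ uCond d (d * k + e) (d * (k - a) + e - d) p}) := by
  obtain ⟨c, rfl⟩ := Nat.exists_eq_add_of_le hak
  have hN : d * (a + c) = d * a + d * c := by ring
  rw [Nat.add_sub_cancel_left]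
  ext p
  simp only [Set.mem_union, Set.mem_ofPred_eq, Set.mem_image]
  constructor
  · rintro ⟨hp, hc⟩
    obtain ⟨p', hp', hpp⟩ := exists_opShift_eq hp
    have hb := hp.2.2 1
    by_cases hlt : p.1 1 + 1 ≤ d * a + (d - 1) * p.2 1
    · exact Or.inl ⟨hp, hlt, hc.2⟩
    right
    rw [← hpp] at hc
    obtain ⟨⟨h1, ⟨s, hs⟩, h3⟩, h4⟩ := (ubarCond_opShift_iff hp').1 hc
    have hb01 : p.2 1 = 0 ∨ p.2 1 = 1 := by omega
    rcases hb01 with hb0 | hb0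
    · left
      rw [hb0] at h1 h3 hs hlt hpp
      have hsa : s = a := by
        apply le_antisymm
        · have : d * s < d * (a + 1) := by rw [mul_add]; omega
          exact Nat.lt_succ_iff.1 (lt_of_mul_lt_mul_left this (Nat.zero_le d))
        · have : d * a ≤ d * s := by omega
          exact le_of_mul_le_mul_left this hd
      subst hsa
      rw [show p.1 1 = d * s by omega] at hpp h3
      exact ⟨p', ⟨hp', by omega, h4⟩, hpp⟩
    · right
      rw [hb0] at h1 h3 hs hlt hpp
      have hsa : s = a + 1 := by
        apply le_antisymm
        · have : d * s < d * (a + 2) := by rw [mul_add]; omega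
          exact Nat.lt_succ_iff.1 (lt_of_mul_lt_mul_left this (Nat.zero_le d))
        · have : d * (a + 1) ≤ d * s := by rw [mul_add]; omega
          exact le_of_mul_le_mul_left this hd
      subst hsa
      rw [mul_add] at hs
      rw [show p.1 1 = d * a + (d - 1) by omega] at hpp h3
      exact ⟨p', ⟨hp', by omega, h4⟩, hpp⟩
  · rintro (⟨hp, h1, h2⟩ | ⟨p', ⟨hp', h1, h2⟩, rfl⟩ | ⟨p', ⟨hp', h1, h2⟩, rfl⟩)
    · exact ⟨hp, by omega, h2⟩
    · refine ⟨isOverPtn_opShift hp' (by omega), (ubarCond_opShift_iff hp').2 ⟨⟨?_, ?_, ?_⟩, h2⟩⟩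
      · omega
      · simp
      · omega
    · refine ⟨isOverPtn_opShift hp' le_rfl, (ubarCond_opShift_iff hp').2 ⟨⟨?_, ?_, ?_⟩, h2⟩⟩
      · omega
      · rw [show d * a + (d - 1) + 1 = d * (a + 1) by rw [mul_add]; omega]
        exact dvd_mul_right _ _
      · have := h2.1 0
        simp only [mul_zero, zero_add] at this
        omega

/-- Lemma 2.2, second functional equation:
`Ū_{dk+e, da+d}(x) − Ū_{dk+e, d(a-1)+d}(x)
  = (xq)^{da} U_{dk+e, d(k-a)+e}(xq) + (xq)^{da+d} U_{dk+e, d(k-a-1)+e}(xq)`.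
(Note `d(a-1) + d = da`, and `d(k-a-1)+e` is expressed via truncated subtraction, which
is harmless since `U_{dk+e, M} = 0` for all `M ≤ 0`.) -/
theorem Ubar_functional_equation (d k e a : ℕ) (hd : 1 ≤ d) (hk : 1 ≤ k) (hak : a ≤ k)
    (he1 : 1 ≤ e) (hed : e ≤ d)
    (x q : ℂ) (hx : ‖x‖ ≤ 1) (hq : ‖q‖ < 1) :
    UbarGf d (d * k + e) (d * a + d) x q - UbarGf d (d * k + e) (d * a) x q
      = (x * q) ^ (d * a) * Ugf d (d * k + e) (d * (k - a) + e) (x * q) q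
        + (x * q) ^ (d * a + d) * Ugf d (d * k + e) (d * (k - a) + e - d) (x * q) q := by
  have hxq : ‖x * q‖ ≤ 1 := by
    rw [norm_mul]
    exact mul_le_one₀ hx (norm_nonneg q) hq.le
  have hbar : ∀ M, UbarGf d (d * k + e) M x q
      = ∑' p : {p | IsOverPtn p ∧ ubarCond d (d * k + e) M p}, opTerm x q p :=
    fun M => tsum_ncard_mul_pow hx hq _
  have hu : ∀ j b M, (x * q) ^ (j + b) * Ugf d (d * k + e) M (x * q) q
      = ∑' p : opShift j b '' {p | IsOverPtn p ∧ uCond d (d * k + e) M p}, opTerm x q p := by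
    intro j b M
    rw [tsum_image (opTerm x q) (opShift_injective j b).injOn]
    simp only [opTerm_opShift]
    rw [tsum_mul_left]
    exact congrArg _ (tsum_ncard_mul_pow hxq hq _)
  have hmem := setOf_ubarCond_eq_union hd hak he1 hed
  have hover : ∀ p ∈ {p | IsOverPtn p ∧ ubarCond d (d * k + e) (d * a + d) p}, IsOverPtn p :=
    fun p hp => hp.1
  have hsum : ∀ S ⊆ {p | IsOverPtn p ∧ ubarCond d (d * k + e) (d * a + d) p},
      Summable (opTerm x q ∘ ((↑) : S → (ℕ →₀ ℕ) × (ℕ →₀ ℕ))) :=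
    fun S hS => summable_opTerm hx hq fun p hp => hover p (hS hp)
  rw [hmem] at hsum
  have hA := hu (d * a) 0 (d * (k - a) + e)
  have hB := hu (d * a + (d - 1)) 1 (d * (k - a) + e - d)
  rw [add_zero] at hA
  rw [show d * a + (d - 1) + 1 = d * a + d by omega] at hB
  rw [hA, hB, hbar, hbar, hmem, Summable.tsum_union_disjoint ?_ (hsum _ Set.subset_union_left)
    (hsum _ Set.subset_union_right), Summable.tsum_union_disjoint ?_
    (hsum _ (Set.subset_union_left.trans Set.subset_union_right))
    (hsum _ (Set.subset_union_right.trans Set.subset_union_right)), add_sub_cancel_left]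
  · rw [Set.disjoint_left]
    rintro _ ⟨p, hp, rfl⟩ ⟨p', hp', h⟩
    have h1 := congrArg (fun z => z.2 1) h
    simp [opShift, shiftAdd_one, hp.1.2.1, hp'.1.2.1] at h1
  · rw [Set.disjoint_left]
    rintro _ ⟨_, h, _⟩ (⟨p, hp, rfl⟩ | ⟨p, hp, rfl⟩) <;>
    · simp only [opShift, shiftAdd_one, hp.1.1, hp.1.2.1] at h
      omega
end
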